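/- arXiv:1604.00460 — 4 statements merged into one kernel-verified Lean document; each statement's English description precedes it below -/
import Mathlib

section
/- Consider a scaling of the heterogeneous key predistribution model with on/off channels satisfying Λ_1(n) = α_n λ_1(n) = c_n (log n)/n with lim_{n→∞} c_n = c. If c < 1, then limsup_{n→∞} E[x_{n,1} x_{n,2}] / (E[x_{n,1}])² ≤ 1, where x_{n,ℓ} is the indicator that vertex v_ℓ belongs to class 1 and is isolated in G(n; μ, K_n, P_n, α_n). -/
/-!
Write `Λ = α λ₁`, let `p = p₁₁`, and let `C = ∑ 1/μ_j`. Conditioning on the key ring of a class-1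
vertex, the other vertices are independently adjacent to it with probability `Λ`, so
`E[x₁] = μ₁ (1 - Λ)^(n-1)` (`pr_isolated`).

For two class-1 vertices with rings `S`, `T`, another vertex is adjacent to neither with probability
`1 - 2Λ + α² ∑ μ_j P[a ring of size K_j meets both S and T]`. If `S` and `T` are disjoint, the two
meetings are negatively correlated (log-concavity of the binomial coefficient in its upper index,
`avoidProb_two_mul_le`), so the last term is at most `α² ∑ μ_j p_{1j}² ≤ C Λ²`. If they intersect,
which has probability `p`, an extra `α Λ` suffices. This bounds the second moment by
`μ₁² ((1 - p) X^(n-2) + p Y^(n-2))` with `X = (1 - Λ)² + C Λ²` and `Y = X + α Λ`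
(`pr_isolated_two_le`).

Put `L = n Λ / (1 - Λ)²`. The ratio of the moments is then at most
`(1 - Λ)⁻² exp(C Λ L) (1 + p (exp(α L) - 1))`, and `p (exp(α L) - 1) ≤ α p L exp L ≤ Λ L exp L / μ₁`
because `α μ₁ p ≤ Λ` (`ratio_le`). As `Λ = c_n log n / n` and `c_n → c < 1`, the error `Λ L exp L` is
at most of order `(log n)² n^(c' - 1)` for some `c' < 1`, and the bound tends to `1`
(`tendsto_bound`).
-/

open Filter

/-- Probability that a uniformly random `b`-subset of a `P`-set avoids a fixed `a`-subset. -/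
noncomputable def avoidProb (P a b : ℕ) : ℝ := ((P - a).choose b : ℝ) / (P.choose b : ℝ)

/-- `p_{ab}` : probability that independent uniformly random key rings of sizes
`a` and `b` (from a pool of size `P`) intersect. -/
noncomputable def pEdge (P a b : ℕ) : ℝ := 1 - avoidProb P a b

/-- `λ_i` : mean edge probability of a class-`i` node in the inhomogeneous random key graph. -/
noncomputable def lamb {r : ℕ} (μ : Fin (r + 1) → ℝ) (K : Fin (r + 1) → ℕ) (P : ℕ)
    (i : Fin (r + 1)) : ℝ :=
  ∑ j, μ j * pEdge P (K i) (K j)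

/-- A configuration of the model: a class for each vertex, a key ring for each vertex,
and an on/off state for each (unordered) channel. -/
abbrev Config (n r P : ℕ) := (Fin n → Fin (r + 1)) × (Fin n → Finset (Fin P)) × (Sym2 (Fin n) → Bool)

/-- Probability weight of a configuration: classes are i.i.d. with law `μ`; given its class `i`,
a vertex's key ring is uniform among the `C(P, K i)` subsets of size `K i`; channels over
distinct pairs are i.i.d. Bernoulli(`α`) (diagonal channel variables are forced to `false`). -/
noncomputable def wt {n r P : ℕ} (μ : Fin (r + 1) → ℝ) (K : Fin (r + 1) → ℕ) (α : ℝ)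
    (c : Config n r P) : ℝ :=
  (∏ x : Fin n, μ (c.1 x)) *
    (∏ x : Fin n, if (c.2.1 x).card = K (c.1 x) then ((P.choose (K (c.1 x)) : ℝ))⁻¹ else 0) *
    (∏ e : Sym2 (Fin n),
      if e.IsDiag then (if c.2.2 e then 0 else 1) else (if c.2.2 e then α else 1 - α))

open Classical in
/-- Probability of an event under the heterogeneous key predistribution model
with on/off channels. -/
noncomputable def pr {n r P : ℕ} (μ : Fin (r + 1) → ℝ) (K : Fin (r + 1) → ℕ) (α : ℝ)
    (E : Config n r P → Prop) : ℝ :=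
  ∑ c : Config n r P, if E c then wt μ K α c else 0

/-- Two vertices are adjacent iff their key rings intersect and the channel between them is on. -/
def Adj {n r P : ℕ} (c : Config n r P) (x y : Fin n) : Prop :=
  x ≠ y ∧ ((c.2.1 x) ∩ (c.2.1 y)).Nonempty ∧ c.2.2 s(x, y) = true

/-- The random graph `G(n; μ, K, P, α)` as a simple graph. -/
def graphOf {n r P : ℕ} (c : Config n r P) : SimpleGraph (Fin n) :=
  SimpleGraph.fromRel (fun x y => ((c.2.1 x) ∩ (c.2.1 y)).Nonempty ∧ c.2.2 s(x, y) = true)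

/-- A vertex is isolated if it has no neighbours. -/
def Isolated {n r P : ℕ} (c : Config n r P) (x : Fin n) : Prop := ∀ y, ¬ Adj c x y

/-- The graph has no isolated nodes. -/
def NoIsolatedNodes {n r P : ℕ} (c : Config n r P) : Prop := ∀ x, ¬ Isolated c x

/-- Event that the vertex with index `idx` belongs to class `1` (index `0`)
and is isolated. -/
def IdxIsClass1Isolated {n r P : ℕ} (idx : ℕ) (cfg : Config n r P) : Prop :=
  ∃ x : Fin n, (x : ℕ) = idx ∧ cfg.1 x = 0 ∧ Isolated cfg x

/-! ### Single-vertex and single-channel laws -/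

/-- Weight of a single on/off channel state. -/
noncomputable def chanW {n : ℕ} (α : ℝ) (e : Sym2 (Fin n)) (b : Bool) : ℝ :=
  if e.IsDiag then (if b then 0 else 1) else (if b then α else 1 - α)

/-- Law of the key ring of a vertex of ring size `b`: uniform on the `b`-subsets. -/
noncomputable def ringW (P b : ℕ) (S : Finset (Fin P)) : ℝ :=
  if S.card = b then ((P.choose b : ℝ))⁻¹ else 0

/-- Joint law of the class and the key ring of a single vertex. -/
noncomputable def nodeW {r P : ℕ} (μ : Fin (r + 1) → ℝ) (K : Fin (r + 1) → ℕ)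
    (v : Fin (r + 1) × Finset (Fin P)) : ℝ :=
  μ v.1 * ringW P (K v.1) v.2

open Classical in
/-- Conditional probability, given two key rings, that a channel does not turn into an edge. -/
noncomputable def noEdge {P : ℕ} (α : ℝ) (S T : Finset (Fin P)) : ℝ :=
  if (S ∩ T).Nonempty then 1 - α else 1

open Classical in
/-- The channels indexed by `I` through the injection `φ` are all off with probability
`(1 - α)` to the number of these channels. -/
lemma sum_chan {n : ℕ} {ι : Type*} [Fintype ι] (α : ℝ) (φ : ι → Sym2 (Fin n))
    (hφ : Function.Injective φ) (hd : ∀ q, ¬ (φ q).IsDiag) (I : ι → Prop) :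
    ∑ B : Sym2 (Fin n) → Bool,
        (if ∀ q, I q → B (φ q) = false then ∏ e, chanW α e (B e) else 0)
      = ∏ q, (if I q then 1 - α else 1) := by
  have h1 : ∀ B : Sym2 (Fin n) → Bool,
      (if ∀ q, I q → B (φ q) = false then ∏ e, chanW α e (B e) else 0)
        = ∏ e, (if (∃ q, φ q = e ∧ I q) ∧ B e = true then 0 else chanW α e (B e)) := by
    intro B
    split_ifs with h
    · refine Finset.prod_congr rfl fun e _ => ?_
      rw [if_neg]
      rintro ⟨⟨q, rfl, hq⟩, hB⟩
      simp [h q hq] at hB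
    · push Not at h
      obtain ⟨q, hq, hB⟩ := h
      symm
      apply Finset.prod_eq_zero (Finset.mem_univ (φ q))
      rw [if_pos]
      exact ⟨⟨q, rfl, hq⟩, by simpa using hB⟩
  rw [Finset.sum_congr rfl fun B _ => h1 B]
  have h2 := (Finset.prod_univ_sum (fun _ : Sym2 (Fin n) => (Finset.univ : Finset Bool))
    (fun e b => if (∃ q, φ q = e ∧ I q) ∧ b = true then (0:ℝ) else chanW α e b))
  rw [Fintype.piFinset_univ] at h2
  rw [← h2]
  symm
  apply Fintype.prod_of_injective φ hφ
  · intro e he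
    have : ¬ ∃ q, φ q = e ∧ I q := fun ⟨q, hq, _⟩ => he ⟨q, hq⟩
    simp only [this, chanW]
    by_cases hde : e.IsDiag <;> simp [hde]
  · intro q
    have hq : (∃ q', φ q' = φ q ∧ I q') ↔ I q :=
      ⟨fun ⟨q', h, hI⟩ => hφ h ▸ hI, fun h => ⟨q, rfl, h⟩⟩
    simp only [hq, chanW, hd q]
    by_cases hI : I q <;> simp [hI]

open Classical in
/-- Summing the configuration weights in the order: vertices first, channels second. -/
lemma pr_eq_sum {n r P : ℕ} (μ : Fin (r + 1) → ℝ) (K : Fin (r + 1) → ℕ) (α : ℝ)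
    (E : Config n r P → Prop) :
    pr μ K α E = ∑ v : Fin n → Fin (r + 1) × Finset (Fin P),
      (∏ x, nodeW μ K (v x)) * ∑ B : Sym2 (Fin n) → Bool,
        (if E (fun x => (v x).1, fun x => (v x).2, B) then ∏ e, chanW α e (B e) else 0) := by
  unfold pr
  rw [Fintype.sum_prod_type]
  simp_rw [Fintype.sum_prod_type]
  rw [← Fintype.sum_prod_type'
    (f := fun (t : Fin n → Fin (r + 1)) (S : Fin n → Finset (Fin P)) =>
      ∑ B, if E (t, S, B) then wt μ K α (t, S, B) else 0)]
  rw [← (Equiv.arrowProdEquivProdArrow (Fin n) (fun _ => Fin (r+1))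
    (fun _ => Finset (Fin P))).sum_comp]
  refine Finset.sum_congr rfl fun v _ => ?_
  rw [Finset.mul_sum]
  refine Finset.sum_congr rfl fun B _ => ?_
  simp only [Equiv.arrowProdEquivProdArrow, Equiv.coe_fn_mk, wt, mul_ite, mul_zero]
  refine if_congr Iff.rfl ?_ rfl
  simp only [nodeW, ringW, Finset.prod_mul_distrib, chanW]
  congr!

/-! ### Key rings meeting one or two given rings -/

open Classical in
lemma sum_ring_disjoint {P b : ℕ} (T : Finset (Fin P)) :
    ∑ S : Finset (Fin P), ringW P b S * (if (T ∩ S).Nonempty then 0 else 1)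
      = avoidProb P T.card b := by
  have h : ∀ S : Finset (Fin P), ringW P b S * (if (T ∩ S).Nonempty then 0 else 1)
      = if S ∈ Finset.powersetCard b Tᶜ then ((P.choose b : ℝ))⁻¹ else 0 := by
    intro S
    have h1 : S ∈ Finset.powersetCard b Tᶜ ↔ S.card = b ∧ ¬ (T ∩ S).Nonempty := by
      rw [Finset.mem_powersetCard, Finset.subset_compl_comm,
        Finset.not_nonempty_iff_eq_empty, ← Finset.disjoint_iff_inter_eq_empty,
        ← Finset.subset_compl_iff_disjoint_right]
      exact and_comm
    simp only [h1, ringW]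
    split_ifs <;> simp_all
  rw [Finset.sum_congr rfl fun S _ => h S]
  rw [Finset.sum_ite_mem, Finset.univ_inter, Finset.sum_const, Finset.card_powersetCard,
    Finset.card_compl, Fintype.card_fin, avoidProb, nsmul_eq_mul, div_eq_mul_inv]

lemma avoidProb_zero {P b : ℕ} (hb : b ≤ P) : avoidProb P 0 b = 1 := by
  have : (P.choose b : ℝ) ≠ 0 := by exact_mod_cast (Nat.choose_pos hb).ne'
  simp [avoidProb, this]

lemma sum_ring {P b : ℕ} (hb : b ≤ P) : ∑ S : Finset (Fin P), ringW P b S = 1 := by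
  have := sum_ring_disjoint (b := b) (∅ : Finset (Fin P))
  simpa [avoidProb_zero hb] using this

/-- Negative correlation: binomial coefficients are log-concave in the upper index, so avoiding two
disjoint `a`-sets is at most as likely as avoiding one `a`-set twice independently. -/
lemma avoidProb_two_mul_le (P a b : ℕ) : avoidProb P (2 * a) b ≤ avoidProb P a b ^ 2 := by
  have key : (P - 2 * a).choose b * P.choose b ≤ ((P - a).choose b) ^ 2 := by
    have h : (P - 2 * a).descFactorial b * P.descFactorial b ≤ ((P - a).descFactorial b) ^ 2 := by
      simp only [Nat.descFactorial_eq_prod_range]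
      rw [← Finset.prod_mul_distrib, ← Finset.prod_pow]
      refine Finset.prod_le_prod' fun i _ => ?_
      rcases Nat.le_total P (2 * a + i) with h | h
      · have : P - 2 * a - i = 0 := by omega
        simp [this]
      · obtain ⟨k, rfl⟩ := Nat.exists_eq_add_of_le h
        have e1 : 2 * a + i + k - 2 * a - i = k := by omega
        have e2 : 2 * a + i + k - i = k + 2 * a := by omega
        have e3 : 2 * a + i + k - a - i = k + a := by omega
        rw [e1, e2, e3]
        nlinarith
    simp only [Nat.descFactorial_eq_factorial_mul_choose] at h
    have hf := Nat.factorial_pos b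
    have hf2 : 0 < b.factorial ^ 2 := by positivity
    refine Nat.le_of_mul_le_mul_left ?_ hf2
    calc _ = b.factorial * (P - 2 * a).choose b * (b.factorial * P.choose b) := by ring
      _ ≤ _ := h
      _ = _ := by ring
  unfold avoidProb
  rcases Nat.eq_zero_or_pos (P.choose b) with h0 | h0
  · simp [h0]
  have h0' : (0:ℝ) < P.choose b := by exact_mod_cast h0
  rw [div_pow, div_le_div_iff₀ h0' (by positivity)]
  have key' : ((P - 2 * a).choose b : ℝ) * P.choose b ≤ ((P - a).choose b : ℝ) ^ 2 := by
    exact_mod_cast key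
  nlinarith

lemma pEdge_nonneg (P a b : ℕ) : 0 ≤ pEdge P a b := by
  unfold pEdge avoidProb
  have : ((P - a).choose b : ℝ) ≤ P.choose b := by
    exact_mod_cast Nat.choose_le_choose b (Nat.sub_le P a)
  have := div_le_one_of_le₀ this (by positivity)
  linarith

lemma pEdge_le_one (P a b : ℕ) : pEdge P a b ≤ 1 := by
  unfold pEdge avoidProb
  have : (0:ℝ) ≤ ((P - a).choose b : ℝ) / P.choose b := by positivity
  linarith

lemma ringW_nonneg (P b : ℕ) (S : Finset (Fin P)) : 0 ≤ ringW P b S := by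
  unfold ringW; split_ifs <;> positivity

open Classical in
lemma sum_ring_meet {P b : ℕ} (hb : b ≤ P) (T : Finset (Fin P)) :
    ∑ S : Finset (Fin P), ringW P b S * (if (T ∩ S).Nonempty then 1 else 0)
      = pEdge P T.card b := by
  have h := sum_ring_disjoint (b := b) T
  have h' := sum_ring hb
  rw [pEdge, ← h]
  rw [eq_sub_iff_add_eq, ← Finset.sum_add_distrib]
  refine Eq.trans ?_ h'
  refine Finset.sum_congr rfl fun S _ => ?_
  split_ifs <;> simp

open Classical in
/-- Two rings of the same size are both met with probability at most `p²` if they are disjoint and,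
trivially, at most `p` otherwise. -/
lemma sum_ring_meet_two {P a b : ℕ} (hb : b ≤ P) (S T : Finset (Fin P)) (hS : S.card = a)
    (hT : T.card = a) :
    ∑ U : Finset (Fin P), ringW P b U *
        ((if (S ∩ U).Nonempty then 1 else 0) * (if (T ∩ U).Nonempty then 1 else 0))
      ≤ pEdge P a b ^ 2 + (if (S ∩ T).Nonempty then pEdge P a b else 0) := by
  split_ifs with h
  · have h1 : ∑ U : Finset (Fin P), ringW P b U *
        ((if (S ∩ U).Nonempty then 1 else 0) * (if (T ∩ U).Nonempty then 1 else 0))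
        ≤ pEdge P a b := by
      rw [← hS, ← sum_ring_meet hb S]
      refine Finset.sum_le_sum fun U _ => ?_
      refine mul_le_mul_of_nonneg_left ?_ (ringW_nonneg _ _ _)
      split_ifs <;> simp
    nlinarith [sq_nonneg (pEdge P a b)]
  · have hdisj : Disjoint S T := by
      rwa [Finset.disjoint_iff_inter_eq_empty, ← Finset.not_nonempty_iff_eq_empty]
    have hc : (S ∪ T).card = 2 * a := by
      rw [Finset.card_union_of_disjoint hdisj, hS, hT]; ring
    have e : ∀ U : Finset (Fin P), ringW P b U *
        ((if (S ∩ U).Nonempty then 1 else 0) * (if (T ∩ U).Nonempty then 1 else 0))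
        = ringW P b U * (if (S ∩ U).Nonempty then 1 else 0)
          + ringW P b U * (if (T ∩ U).Nonempty then 1 else 0)
          - ringW P b U + ringW P b U * (if ((S ∪ T) ∩ U).Nonempty then 0 else 1) := by
      intro U
      simp only [Finset.union_inter_distrib_right, Finset.union_nonempty]
      by_cases h1 : (S ∩ U).Nonempty <;> by_cases h2 : (T ∩ U).Nonempty <;> simp [h1, h2]
    rw [Finset.sum_congr rfl fun U _ => e U, Finset.sum_add_distrib, Finset.sum_sub_distrib,
      Finset.sum_add_distrib, sum_ring_meet hb, sum_ring_meet hb, sum_ring hb,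
      sum_ring_disjoint, hS, hT, hc]
    have := avoidProb_two_mul_le P a b
    unfold pEdge
    nlinarith

open Classical in
lemma noEdge_eq {P : ℕ} (α : ℝ) (S T : Finset (Fin P)) :
    noEdge α S T = 1 - α * (if (S ∩ T).Nonempty then 1 else 0) := by
  unfold noEdge; split_ifs <;> simp

lemma noEdge_nonneg {P : ℕ} {α : ℝ} (hα : α ∈ Set.Ioo (0 : ℝ) 1) (S T : Finset (Fin P)) :
    0 ≤ noEdge α S T := by
  unfold noEdge; split_ifs <;> linarith [hα.2]

lemma sum_node_noEdge {r P : ℕ} (μ : Fin (r + 1) → ℝ) (hμsum : ∑ i, μ i = 1)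
    (K : Fin (r + 1) → ℕ) (hKP : ∀ j, K j ≤ P) (α : ℝ) (S : Finset (Fin P)) (hS : S.card = K 0) :
    ∑ v : Fin (r + 1) × Finset (Fin P), nodeW μ K v * noEdge α S v.2 = 1 - α * lamb μ K P 0 := by
  have hj : ∀ j, ∑ T : Finset (Fin P), nodeW μ K (j, T) * noEdge α S T
      = μ j - α * (μ j * pEdge P (K 0) (K j)) := by
    intro j
    have e : ∀ T : Finset (Fin P), nodeW μ K (j, T) * noEdge α S T
        = μ j * ringW P (K j) T
          - α * μ j * (ringW P (K j) T * (if (S ∩ T).Nonempty then 1 else 0)) := by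
      intro T
      rw [noEdge_eq, nodeW]
      ring_nf
    rw [Finset.sum_congr rfl fun T _ => e T, Finset.sum_sub_distrib, ← Finset.mul_sum,
      ← Finset.mul_sum, sum_ring (hKP j), sum_ring_meet (hKP j), hS]
    ring
  rw [Fintype.sum_prod_type, Finset.sum_congr rfl fun j _ => hj j, Finset.sum_sub_distrib, hμsum,
    ← Finset.mul_sum, lamb]

/-- Bound for the probability that a third vertex is adjacent to neither of two class-1 vertices
with given key rings; the class average of `p²` costs at most `(∑ 1/μ) Λ²`. -/
lemma sum_node_noEdge_two {r P : ℕ} (μ : Fin (r + 1) → ℝ) (hμpos : ∀ i, 0 < μ i)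
    (hμsum : ∑ i, μ i = 1)
    (K : Fin (r + 1) → ℕ) (hKP : ∀ j, K j ≤ P) (α : ℝ) (hα : α ∈ Set.Ioo (0 : ℝ) 1)
    (S T : Finset (Fin P)) (hS : S.card = K 0) (hT : T.card = K 0) :
    ∑ v : Fin (r + 1) × Finset (Fin P), nodeW μ K v * (noEdge α S v.2 * noEdge α T v.2)
      ≤ (1 - α * lamb μ K P 0) ^ 2 + (∑ i, (μ i)⁻¹) * (α * lamb μ K P 0) ^ 2
        + (if (S ∩ T).Nonempty then α * (α * lamb μ K P 0) else 0) := by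
  set Λ := α * lamb μ K P 0 with hΛ
  have hα0 := hα.1
  have hα1 := hα.2
  have hterm : ∀ j, 0 ≤ μ j * pEdge P (K 0) (K j) :=
    fun j => mul_nonneg (hμpos j).le (pEdge_nonneg _ _ _)
  have hsq : ∀ j, α ^ 2 * (μ j * pEdge P (K 0) (K j) ^ 2) ≤ (μ j)⁻¹ * Λ ^ 2 := by
    intro j
    have h1 : μ j * pEdge P (K 0) (K j) ≤ lamb μ K P 0 :=
      Finset.single_le_sum (f := fun j => μ j * pEdge P (K 0) (K j))
        (fun j _ => hterm j) (Finset.mem_univ j)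
    have h2 : (μ j * pEdge P (K 0) (K j)) ^ 2 ≤ lamb μ K P 0 ^ 2 :=
      pow_le_pow_left₀ (hterm j) h1 2
    have h3 : μ j * pEdge P (K 0) (K j) ^ 2 = (μ j)⁻¹ * (μ j * pEdge P (K 0) (K j)) ^ 2 := by
      have := (hμpos j).ne'
      field_simp
    rw [h3, hΛ, mul_pow]
    have h4 : 0 ≤ α ^ 2 * (μ j)⁻¹ := by have := hμpos j; positivity
    nlinarith [mul_le_mul_of_nonneg_left h2 h4]
  have hj : ∀ j, ∑ U : Finset (Fin P), nodeW μ K (j, U) * (noEdge α S U * noEdge α T U)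
      ≤ μ j - 2 * α * (μ j * pEdge P (K 0) (K j)) + (μ j)⁻¹ * Λ ^ 2
        + (if (S ∩ T).Nonempty then α * α * (μ j * pEdge P (K 0) (K j)) else 0) := by
    intro j
    have e : ∀ U : Finset (Fin P), nodeW μ K (j, U) * (noEdge α S U * noEdge α T U)
        = μ j * ringW P (K j) U
          - α * μ j * (ringW P (K j) U * (if (S ∩ U).Nonempty then 1 else 0))
          - α * μ j * (ringW P (K j) U * (if (T ∩ U).Nonempty then 1 else 0))
          + α ^ 2 * μ j * (ringW P (K j) U *
            ((if (S ∩ U).Nonempty then 1 else 0) * (if (T ∩ U).Nonempty then 1 else 0))) := by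
      intro U
      rw [noEdge, noEdge, nodeW]
      by_cases h1 : (S ∩ U).Nonempty <;> by_cases h2 : (T ∩ U).Nonempty <;> simp [h1, h2] <;> ring
    have h2 : ∑ U : Finset (Fin P), ringW P (K j) U *
        ((if (S ∩ U).Nonempty then 1 else 0) * (if (T ∩ U).Nonempty then 1 else 0))
      ≤ pEdge P (K 0) (K j) ^ 2 + (if (S ∩ T).Nonempty then pEdge P (K 0) (K j) else 0) := by
      have := sum_ring_meet_two (hKP j) S T hS hT
      convert this using 3
    rw [Finset.sum_congr rfl fun U _ => e U, Finset.sum_add_distrib, Finset.sum_sub_distrib,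
      Finset.sum_sub_distrib, ← Finset.mul_sum, ← Finset.mul_sum, ← Finset.mul_sum,
      ← Finset.mul_sum, sum_ring (hKP j), sum_ring_meet (hKP j), sum_ring_meet (hKP j), hS, hT]
    have h4 : 0 ≤ α ^ 2 * μ j := by have := hμpos j; positivity
    have h5 := mul_le_mul_of_nonneg_left h2 h4
    have h6 := hsq j
    split_ifs at h5 ⊢ <;> nlinarith
  rw [Fintype.sum_prod_type]
  refine (Finset.sum_le_sum fun j _ => hj j).trans ?_
  have hite : ∑ j, (if (S ∩ T).Nonempty then α * α * (μ j * pEdge P (K 0) (K j)) else 0)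
      = if (S ∩ T).Nonempty then α * Λ else 0 := by
    split_ifs
    · rw [← Finset.mul_sum, hΛ, lamb]; ring
    · simp
  rw [Finset.sum_add_distrib, Finset.sum_add_distrib, Finset.sum_sub_distrib, hμsum, hite,
    ← Finset.mul_sum, ← Finset.sum_mul]
  have : 2 * α * ∑ i, μ i * pEdge P (K 0) (K i) = 2 * Λ := by rw [hΛ, lamb]; ring
  rw [this]
  nlinarith [sq_nonneg Λ]

lemma nodeW_nonneg {r P : ℕ} {μ : Fin (r + 1) → ℝ} (hμpos : ∀ i, 0 < μ i)
    (K : Fin (r + 1) → ℕ) (v : Fin (r + 1) × Finset (Fin P)) : 0 ≤ nodeW μ K v :=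
  mul_nonneg (hμpos _).le (ringW_nonneg _ _ _)

lemma chanW_nonneg {n : ℕ} {α : ℝ} (hα : α ∈ Set.Ioo (0 : ℝ) 1) (e : Sym2 (Fin n)) (b : Bool) :
    0 ≤ chanW α e b := by
  unfold chanW
  split_ifs <;> linarith [hα.1, hα.2]

/-! ### The two moments -/

/-- Splitting off the class and ring of the first vertex. -/
lemma sum_fin_cons {V : Type*} [Fintype V] {m : ℕ} (F : (Fin (m + 1) → V) → ℝ) :
    ∑ v, F v = ∑ v0, ∑ v' : Fin m → V, F (Fin.cons v0 v') := by
  rw [← (Fin.consEquiv (fun _ : Fin (m + 1) => V)).sum_comp, Fintype.sum_prod_type]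
  rfl

/-- Summation over the class and ring of a class-1 vertex. -/
lemma sum_node_class1 {r P : ℕ} (μ : Fin (r + 1) → ℝ) (K : Fin (r + 1) → ℕ)
    (g : Finset (Fin P) → ℝ) :
    ∑ v : Fin (r + 1) × Finset (Fin P), nodeW μ K v * (if v.1 = 0 then g v.2 else 0)
      = μ 0 * ∑ S, ringW P (K 0) S * g S := by
  rw [Fintype.sum_prod_type, Finset.sum_eq_single 0]
  · simp only [nodeW, if_true, Finset.mul_sum, mul_assoc]
  · intro j _ hj
    simp [hj]
  · simp

/-- First moment: given the ring of the vertex, the other vertices are independently non-adjacent to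
it, each with probability `1 - Λ`. -/
lemma pr_isolated {r P m : ℕ} (μ : Fin (r + 1) → ℝ) (hμsum : ∑ i, μ i = 1)
    (K : Fin (r + 1) → ℕ) (hKP : ∀ j, K j ≤ P) (α : ℝ) :
    pr μ K α (fun cfg : Config (m + 1) r P => IdxIsClass1Isolated 0 cfg)
      = μ 0 * (1 - α * lamb μ K P 0) ^ m := by
  classical
  rw [pr_eq_sum, sum_fin_cons]
  have hE : ∀ (v0 : Fin (r + 1) × Finset (Fin P)) (v' : Fin m → Fin (r + 1) × Finset (Fin P))
      (B : Sym2 (Fin (m + 1)) → Bool),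
      IdxIsClass1Isolated 0 ((fun x => (Fin.cons (α := fun _ => _) v0 v' x).1,
        fun x => (Fin.cons (α := fun _ => _) v0 v' x).2, B) : Config (m + 1) r P) ↔
      v0.1 = 0 ∧ ∀ k : Fin m, (v0.2 ∩ (v' k).2).Nonempty → B s(0, k.succ) = false := by
    intro v0 v' B
    have h0 : ∀ x : Fin (m + 1), (x : ℕ) = 0 ↔ x = 0 := fun x => Fin.val_eq_zero_iff
    simp only [IdxIsClass1Isolated, Isolated, Adj, h0, exists_eq_left, Fin.forall_fin_succ,
      Fin.cons_zero, Fin.cons_succ]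
    simp [fun k : Fin m => (Fin.succ_ne_zero k).symm]
  have hinner : ∀ (v0 : Fin (r + 1) × Finset (Fin P))
      (v' : Fin m → Fin (r + 1) × Finset (Fin P)),
      (∑ B : Sym2 (Fin (m + 1)) → Bool,
        if IdxIsClass1Isolated 0 ((fun x => (Fin.cons (α := fun _ => _) v0 v' x).1,
          fun x => (Fin.cons (α := fun _ => _) v0 v' x).2, B) : Config (m + 1) r P)
        then ∏ e, chanW α e (B e) else 0)
      = if v0.1 = 0 then ∏ k, noEdge α v0.2 (v' k).2 else 0 := by
    intro v0 v'
    simp only [hE]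
    by_cases h : v0.1 = 0
    · simp only [h, true_and, if_true]
      have := sum_chan α (fun k : Fin m => s((0 : Fin (m + 1)), k.succ))
        (by intro a b hab; simpa using hab) (by intro q; simp [(Fin.succ_ne_zero q).symm])
        (fun k => (v0.2 ∩ (v' k).2).Nonempty)
      unfold noEdge
      convert this
    · simp [h]
  have hv0 : ∀ v0 : Fin (r + 1) × Finset (Fin P),
      (∑ v' : Fin m → Fin (r + 1) × Finset (Fin P),
        (∏ x, nodeW μ K ((Fin.cons v0 v' : Fin (m + 1) → _) x)) *
        (if v0.1 = 0 then ∏ k, noEdge α v0.2 (v' k).2 else 0))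
      = nodeW μ K v0 * if v0.1 = 0 then
          (∑ v : Fin (r + 1) × Finset (Fin P), nodeW μ K v * noEdge α v0.2 v.2) ^ m else 0 := by
    intro v0
    by_cases h : v0.1 = 0
    · simp only [h, if_true, Fin.prod_univ_succ, Fin.cons_zero, Fin.cons_succ]
      rw [Fintype.sum_pow, Finset.mul_sum]
      refine Finset.sum_congr rfl fun v' _ => ?_
      rw [Finset.prod_mul_distrib]; ring
    · simp [h]
  calc _ = ∑ v0, ∑ v' : Fin m → Fin (r + 1) × Finset (Fin P),
        (∏ x, nodeW μ K ((Fin.cons v0 v' : Fin (m + 1) → _) x)) *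
        (if v0.1 = 0 then ∏ k, noEdge α v0.2 (v' k).2 else 0) := by
        refine Finset.sum_congr rfl fun v0 _ => Finset.sum_congr rfl fun v' _ => ?_
        rw [← hinner]
    _ = _ := by
      rw [Finset.sum_congr rfl fun v0 _ => hv0 v0]
      rw [sum_node_class1 μ K (fun S =>
        (∑ v : Fin (r + 1) × Finset (Fin P), nodeW μ K v * noEdge α S v.2) ^ m)]
      congr 1
      refine Eq.trans ?_ (one_mul ((1 - α * lamb μ K P 0) ^ m))
      refine Eq.trans ?_ (congrArg (· * (1 - α * lamb μ K P 0) ^ m) (sum_ring (hKP 0)))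
      rw [Finset.sum_mul]
      refine Finset.sum_congr rfl fun S _ => ?_
      by_cases hS : S.card = K 0
      · rw [sum_node_noEdge μ hμsum K hKP α S hS]
      · simp [ringW, hS]

/-- Second moment, bounded by ignoring the channel between the two vertices. Given their rings, each
of the other `m` vertices avoids both with probability at most `X` if the rings are disjoint and at
most `Y` if they meet, the latter having probability `pEdge P (K 0) (K 0)`. -/
lemma pr_isolated_two_le {r P m : ℕ} (μ : Fin (r + 1) → ℝ) (hμpos : ∀ i, 0 < μ i)
    (hμsum : ∑ i, μ i = 1) (K : Fin (r + 1) → ℕ) (hKP : ∀ j, K j ≤ P) (α : ℝ)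
    (hα : α ∈ Set.Ioo (0 : ℝ) 1) (X Y : ℝ)
    (hX : X = (1 - α * lamb μ K P 0) ^ 2 + (∑ i, (μ i)⁻¹) * (α * lamb μ K P 0) ^ 2)
    (hY : Y = X + α * (α * lamb μ K P 0)) :
    pr μ K α (fun cfg : Config (m + 2) r P =>
        IdxIsClass1Isolated 0 cfg ∧ IdxIsClass1Isolated 1 cfg)
      ≤ μ 0 ^ 2 * ((1 - pEdge P (K 0) (K 0)) * X ^ m + pEdge P (K 0) (K 0) * Y ^ m) := by
  classical
  rw [pr_eq_sum, sum_fin_cons]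
  simp_rw [sum_fin_cons]
  -- `φ (b, k)` is the channel between vertex `b ∈ {0, 1}` and the `k`-th remaining vertex.
  let φ : Bool × Fin m → Sym2 (Fin (m + 2)) := fun q => s(if q.1 then 1 else 0, q.2.succ.succ)
  have hne : ∀ (b : Bool) (k : Fin m), (if b then 1 else 0 : Fin (m + 2)) ≠ k.succ.succ := by
    intro b k h
    have := congrArg Fin.val h
    cases b <;> simp at this
  have hφ : Function.Injective φ := by
    rintro ⟨b, k⟩ ⟨b', k'⟩ h
    simp only [φ, Sym2.eq_iff] at h
    rcases h with ⟨h1, h2⟩ | ⟨h1, h2⟩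
    · have hk : k = k' := by simpa using h2
      have hb : b = b' := by cases b <;> cases b' <;> simp at h1 ⊢
      rw [hk, hb]
    · exact absurd h1 (hne _ _)
  have hd : ∀ q, ¬ (φ q).IsDiag := by
    rintro ⟨b, k⟩ h
    exact hne b k (by simpa [φ] using h)
  have hinner : ∀ (v0 v1 : Fin (r + 1) × Finset (Fin P))
      (v' : Fin m → Fin (r + 1) × Finset (Fin P)),
      (∑ B : Sym2 (Fin (m + 2)) → Bool,
        if IdxIsClass1Isolated 0 ((fun x => ((Fin.cons v0 (Fin.cons v1 v') : Fin (m + 2) → _) x).1,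
          fun x => ((Fin.cons v0 (Fin.cons v1 v') : Fin (m + 2) → _) x).2, B) : Config (m + 2) r P)
          ∧ IdxIsClass1Isolated 1 ((fun x => ((Fin.cons v0 (Fin.cons v1 v') : Fin (m + 2) → _) x).1,
          fun x => ((Fin.cons v0 (Fin.cons v1 v') : Fin (m + 2) → _) x).2, B) : Config (m + 2) r P)
        then ∏ e, chanW α e (B e) else 0)
      ≤ if v0.1 = 0 then (if v1.1 = 0 then
          ∏ k, noEdge α v0.2 (v' k).2 * noEdge α v1.2 (v' k).2 else 0) else 0 := by
    intro v0 v1 v'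
    have hE : ∀ (B : Sym2 (Fin (m + 2)) → Bool),
        (IdxIsClass1Isolated 0 ((fun x => ((Fin.cons v0 (Fin.cons v1 v') : Fin (m + 2) → _) x).1,
          fun x => ((Fin.cons v0 (Fin.cons v1 v') : Fin (m + 2) → _) x).2, B) : Config (m + 2) r P)
          ∧ IdxIsClass1Isolated 1 ((fun x => ((Fin.cons v0 (Fin.cons v1 v') : Fin (m + 2) → _) x).1,
          fun x => ((Fin.cons v0 (Fin.cons v1 v') : Fin (m + 2) → _) x).2, B) : Config (m + 2) r P))
        → v0.1 = 0 ∧ v1.1 = 0 ∧ ∀ q : Bool × Fin m,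
          ((if q.1 then v1 else v0).2 ∩ (v' q.2).2).Nonempty → B (φ q) = false := by
      rintro B ⟨⟨x, hx, hx1, hx2⟩, ⟨y, hy, hy1, hy2⟩⟩
      obtain rfl : x = 0 := Fin.ext hx
      obtain rfl : y = 1 := Fin.ext (by simpa using hy)
      refine ⟨hx1, hy1, ?_⟩
      rintro ⟨b, k⟩ hq
      by_contra hB
      rw [Bool.not_eq_false] at hB
      cases b
      · exact hx2 k.succ.succ ⟨hne false k, hq, hB⟩
      · exact hy2 k.succ.succ ⟨hne true k, hq, hB⟩
    by_cases h0 : v0.1 = 0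
    swap
    · rw [if_neg h0]
      exact (Finset.sum_eq_zero fun B _ => if_neg fun h => h0 (hE B h).1).le
    by_cases h1 : v1.1 = 0
    swap
    · rw [if_pos h0, if_neg h1]
      exact (Finset.sum_eq_zero fun B _ => if_neg fun h => h1 (hE B h).2.1).le
    rw [if_pos h0, if_pos h1]
    have hc := sum_chan α φ hφ hd
      (fun q => ((if q.1 then v1 else v0).2 ∩ (v' q.2).2).Nonempty)
    have hprod : ∏ q : Bool × Fin m,
        (if ((if q.1 then v1 else v0).2 ∩ (v' q.2).2).Nonempty then 1 - α else 1)
        = ∏ k, noEdge α v0.2 (v' k).2 * noEdge α v1.2 (v' k).2 := by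
      rw [Fintype.prod_prod_type, Fintype.prod_bool, ← Finset.prod_mul_distrib]
      refine Finset.prod_congr rfl fun k _ => ?_
      rw [mul_comm]
      simp only [noEdge]
      congr!
    rw [← hprod]
    refine le_trans (Finset.sum_le_sum fun B _ => ?_) (le_of_eq (hc.trans ?_))
    · by_cases h : ∀ q : Bool × Fin m,
          ((if q.1 then v1 else v0).2 ∩ (v' q.2).2).Nonempty → B (φ q) = false
      · rw [if_pos h]
        split_ifs
        · exact le_of_eq (by congr!)
        · exact Finset.prod_nonneg fun e _ => chanW_nonneg hα _ _
      · rw [if_neg h, if_neg fun hh => h (hE B hh).2.2]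
    · congr!
  set Q : Finset (Fin P) → Finset (Fin P) → ℝ := fun S T =>
    (∑ v : Fin (r + 1) × Finset (Fin P), nodeW μ K v * (noEdge α S v.2 * noEdge α T v.2)) with hQ
  have hQ0 : ∀ S T, 0 ≤ Q S T := fun S T => Finset.sum_nonneg fun v _ =>
    mul_nonneg (nodeW_nonneg hμpos K v) (mul_nonneg (noEdge_nonneg hα _ _) (noEdge_nonneg hα _ _))
  have hv : ∀ v0 v1 : Fin (r + 1) × Finset (Fin P),
      (∑ v' : Fin m → Fin (r + 1) × Finset (Fin P),
        (∏ x, nodeW μ K ((Fin.cons v0 (Fin.cons v1 v') : Fin (m + 2) → _) x)) *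
        (if v0.1 = 0 then (if v1.1 = 0 then
          ∏ k, noEdge α v0.2 (v' k).2 * noEdge α v1.2 (v' k).2 else 0) else 0))
      = nodeW μ K v0 * if v0.1 = 0 then
          (nodeW μ K v1 * if v1.1 = 0 then Q v0.2 v1.2 ^ m else 0) else 0 := by
    intro v0 v1
    by_cases h0 : v0.1 = 0
    swap
    · simp [h0]
    by_cases h1 : v1.1 = 0
    swap
    · simp [h1]
    simp only [h0, h1, if_true, Fin.prod_univ_succ, Fin.cons_zero, Fin.cons_succ, hQ]
    rw [Fintype.sum_pow, Finset.mul_sum, Finset.mul_sum]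
    refine Finset.sum_congr rfl fun v' _ => ?_
    simp only [Finset.prod_mul_distrib]; ring
  have hpow : ∀ S T : Finset (Fin P), S.card = K 0 → T.card = K 0 → Q S T ^ m
      ≤ X ^ m + (if (S ∩ T).Nonempty then 1 else 0) * (Y ^ m - X ^ m) := by
    intro S T hS hT
    have h := sum_node_noEdge_two μ hμpos hμsum K hKP α hα S T hS hT
    rw [← hX] at h
    split_ifs at h ⊢ with hST
    · rw [one_mul, add_sub_cancel, hY]
      exact pow_le_pow_left₀ (hQ0 S T) h m
    · rw [zero_mul, add_zero]
      exact pow_le_pow_left₀ (hQ0 S T) (by linarith) m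
  calc _ ≤ ∑ v0, ∑ v1, ∑ v' : Fin m → Fin (r + 1) × Finset (Fin P),
        (∏ x, nodeW μ K ((Fin.cons v0 (Fin.cons v1 v') : Fin (m + 2) → _) x)) *
        (if v0.1 = 0 then (if v1.1 = 0 then
          ∏ k, noEdge α v0.2 (v' k).2 * noEdge α v1.2 (v' k).2 else 0) else 0) := by
        refine Finset.sum_le_sum fun v0 _ => Finset.sum_le_sum fun v1 _ =>
          Finset.sum_le_sum fun v' _ => ?_
        refine mul_le_mul_of_nonneg_left ?_ (Finset.prod_nonneg fun x _ => nodeW_nonneg hμpos K _)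
        refine le_trans (le_of_eq ?_) (hinner v0 v1 v')
        congr!
    _ = μ 0 * ∑ S, ringW P (K 0) S * (μ 0 * ∑ T, ringW P (K 0) T * Q S T ^ m) := by
      simp_rw [hv]
      rw [← sum_node_class1 μ K (fun S => (μ 0 * ∑ T, ringW P (K 0) T * Q S T ^ m))]
      refine Finset.sum_congr rfl fun v0 _ => ?_
      rw [← sum_node_class1 μ K (fun T => Q v0.2 T ^ m), ← Finset.mul_sum]
      split_ifs <;> simp
    _ ≤ μ 0 * ∑ S : Finset (Fin P), ringW P (K 0) S *
        (μ 0 * ((1 - pEdge P (K 0) (K 0)) * X ^ m + pEdge P (K 0) (K 0) * Y ^ m)) := by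
      refine mul_le_mul_of_nonneg_left (Finset.sum_le_sum fun S _ => ?_) (hμpos 0).le
      by_cases hS : S.card = K 0
      swap
      · simp [ringW, hS]
      refine mul_le_mul_of_nonneg_left (mul_le_mul_of_nonneg_left ?_ (hμpos 0).le)
        (ringW_nonneg _ _ _)
      calc _ ≤ ∑ T : Finset (Fin P), (ringW P (K 0) T * X ^ m +
            ringW P (K 0) T * (if (S ∩ T).Nonempty then 1 else 0) * (Y ^ m - X ^ m)) := by
            refine Finset.sum_le_sum fun T _ => ?_
            by_cases hT : T.card = K 0
            swap
            · simp [ringW, hT]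
            have := mul_le_mul_of_nonneg_left (hpow S T hS hT) (ringW_nonneg P (K 0) T)
            linarith
        _ = _ := by
            rw [Finset.sum_add_distrib, ← Finset.sum_mul, ← Finset.sum_mul, sum_ring (hKP 0)]
            rw [sum_ring_meet (hKP 0), hS]
            ring
    _ = _ := by
      rw [← Finset.sum_mul, sum_ring (hKP 0)]
      ring

/-! ### Asymptotics -/

/-- Comparison of the two moments for a single `n = m + 2`. Dividing by `(1 - Λ)²ᵐ` turns `X` and `Y`
into factors `1 + CΛ²/(1-Λ)²` and `1 + CΛ²/(1-Λ)² + αΛ/(1-Λ)²`, which are bounded by exponentials;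
`p (exp (αL) - 1) ≤ αp L exp L` then trades the unknown `α` for `αp ≤ Λ/μ₁`. -/
lemma ratio_le {m : ℕ} {p α Λ C μ0 L : ℝ} (hp0 : 0 ≤ p) (hp1 : p ≤ 1) (hα : α ∈ Set.Ioo (0 : ℝ) 1)
    (hΛ0 : 0 ≤ Λ) (hΛ1 : Λ < 1) (hC : 0 ≤ C) (hμ : 0 < μ0) (hpΛ : α * (μ0 * p) ≤ Λ)
    (hL : L = ((m + 2 : ℕ) : ℝ) * Λ / (1 - Λ) ^ 2) :
    ((1 - p) * ((1 - Λ) ^ 2 + C * Λ ^ 2) ^ m + p * ((1 - Λ) ^ 2 + C * Λ ^ 2 + α * Λ) ^ m)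
        / ((1 - Λ) ^ (m + 1)) ^ 2
      ≤ ((1 - Λ) ^ 2)⁻¹ * Real.exp (C * Λ * L) * (1 + μ0⁻¹ * (Λ * L * Real.exp L)) := by
  obtain ⟨hα0, hα1⟩ := hα
  set D := (1 - Λ) ^ 2 with hD
  have hDpos : 0 < D := by have : 0 < 1 - Λ := by linarith
                           positivity
  have hL0 : 0 ≤ L := by rw [hL]; positivity
  have hmL : (m : ℝ) * Λ / D ≤ L := by
    rw [hL]; gcongr; linarith
  have hpow : ∀ y : ℝ, 0 ≤ y → (D + y * Λ) ^ m ≤ D ^ m * Real.exp (y * L) := by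
    intro y hy
    have e : D + y * Λ = D * (1 + y * Λ / D) := by field_simp
    rw [e, mul_pow]
    refine mul_le_mul_of_nonneg_left ?_ (by positivity)
    calc (1 + y * Λ / D) ^ m ≤ Real.exp (y * Λ / D) ^ m := by
          refine pow_le_pow_left₀ (by positivity) ?_ m
          rw [add_comm]; exact Real.add_one_le_exp _
      _ = Real.exp (y * ((m : ℝ) * Λ / D)) := by rw [← Real.exp_nat_mul]; ring_nf
      _ ≤ _ := Real.exp_le_exp.mpr (mul_le_mul_of_nonneg_left hmL hy)
  have hX : (D + C * Λ ^ 2) ^ m ≤ D ^ m * Real.exp (C * Λ * L) := by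
    have := hpow (C * Λ) (by positivity)
    rwa [show C * Λ * Λ = C * Λ ^ 2 by ring] at this
  have hY : (D + C * Λ ^ 2 + α * Λ) ^ m ≤ D ^ m * Real.exp (C * Λ * L) * Real.exp (α * L) := by
    have := hpow (C * Λ + α) (by positivity)
    rw [add_mul (C * Λ) α L, Real.exp_add, ← mul_assoc] at this
    rwa [show D + (C * Λ + α) * Λ = D + C * Λ ^ 2 + α * Λ by ring] at this
  have hden : ((1 - Λ) ^ (m + 1)) ^ 2 = D * D ^ m := by
    rw [hD, ← pow_succ', ← pow_mul, ← pow_mul, mul_comm]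
  set A := Real.exp (C * Λ * L) with hA
  have hA0 : 0 < A := Real.exp_pos _
  -- `exp x - 1 ≤ x exp x` is `1 - x ≤ exp (-x)`.
  have hexp : Real.exp (α * L) - 1 ≤ α * L * Real.exp L := by
    have h1 := Real.add_one_le_exp (-(α * L))
    have h2 : Real.exp (-(α * L)) * Real.exp (α * L) = 1 := by rw [← Real.exp_add]; simp
    have h3 := mul_le_mul_of_nonneg_right h1 (Real.exp_pos (α * L)).le
    have h4 : Real.exp (α * L) ≤ Real.exp L := Real.exp_le_exp.mpr (by nlinarith)
    have h5 := mul_le_mul_of_nonneg_left h4 (mul_nonneg hα0.le hL0)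
    nlinarith
  have hpe : p * (Real.exp (α * L) - 1) ≤ μ0⁻¹ * (Λ * L * Real.exp L) := by
    have h1 := mul_le_mul_of_nonneg_left hexp hp0
    have h2 : α * p ≤ μ0⁻¹ * Λ := by
      rw [inv_mul_eq_div, le_div_iff₀ hμ]; linarith
    have h3 := mul_le_mul_of_nonneg_right h2 (mul_nonneg hL0 (Real.exp_pos L).le)
    nlinarith
  rw [hden, div_le_iff₀ (by positivity)]
  have e1 : D⁻¹ * A * (1 + μ0⁻¹ * (Λ * L * Real.exp L)) * (D * D ^ m)
      = D ^ m * A * (1 + μ0⁻¹ * (Λ * L * Real.exp L)) := by field_simp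
  rw [e1]
  calc _ ≤ (1 - p) * (D ^ m * A) + p * (D ^ m * A * Real.exp (α * L)) :=
        add_le_add (mul_le_mul_of_nonneg_left hX (by linarith)) (mul_le_mul_of_nonneg_left hY hp0)
    _ = D ^ m * A * (1 + p * (Real.exp (α * L) - 1)) := by ring
    _ ≤ _ := by gcongr

/-- The bound of `ratio_le` tends to `1`: with `L ~ c log n` and a fixed `c' ∈ (c, 1)`, the error
`Λ L exp L` is of order at most `(log n)² n^(c' - 1)`. -/
lemma tendsto_bound (cseq : ℕ → ℝ) (c C M : ℝ) (hc : Tendsto cseq atTop (nhds c)) (hclt : c < 1)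
    (Λ L : ℕ → ℝ) (hΛ : ∀ n, Λ n = cseq n * Real.log n / n)
    (hL : ∀ n, L n = (n : ℝ) * Λ n / (1 - Λ n) ^ 2) :
    Tendsto Λ atTop (nhds 0) ∧
    Tendsto (fun n => ((1 - Λ n) ^ 2)⁻¹ * Real.exp (C * Λ n * L n) *
      (1 + M * (Λ n * L n * Real.exp (L n)))) atTop (nhds 1) := by
  have hlogpow : ∀ (k : ℕ) (s : ℝ), 0 < s →
      Tendsto (fun n : ℕ => Real.log n ^ k / (n : ℝ) ^ s) atTop (nhds 0) := by
    intro k s hs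
    have h := (isLittleO_log_rpow_rpow_atTop (k : ℝ) hs).tendsto_div_nhds_zero
    simp only [Real.rpow_natCast] at h
    exact h.comp tendsto_natCast_atTop_atTop
  have hΛ0 : Tendsto Λ atTop (nhds 0) := by
    have h := hc.mul (hlogpow 1 1 one_pos)
    simp only [mul_zero, pow_one, Real.rpow_one] at h
    refine h.congr fun n => ?_
    rw [hΛ]; ring
  have hδ : Tendsto (fun n => ((1 - Λ n) ^ 2)⁻¹) atTop (nhds 1) := by
    have h := ((hΛ0.const_sub 1).pow 2).inv₀ (by norm_num)
    simpa using h
  set d : ℕ → ℝ := fun n => cseq n * ((1 - Λ n) ^ 2)⁻¹ with hd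
  have hdlim : Tendsto d atTop (nhds c) := by simpa using hc.mul hδ
  have hLd : ∀ᶠ n : ℕ in atTop, L n = d n * Real.log n := by
    filter_upwards [eventually_gt_atTop 0] with n hn
    have : (n : ℝ) ≠ 0 := by positivity
    have h2 : (n : ℝ) * Λ n = cseq n * Real.log n := by rw [hΛ]; field_simp
    rw [hL, h2, hd, div_eq_mul_inv]; ring
  have hΛL : ∀ᶠ n : ℕ in atTop, Λ n * L n = cseq n * d n * (Real.log n ^ 2 / n) := by
    filter_upwards [hLd] with n hn
    rw [hn, hΛ]; ring
  have hΛL0 : Tendsto (fun n => Λ n * L n) atTop (nhds 0) := by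
    have h := (hc.mul hdlim).mul (hlogpow 2 1 one_pos)
    simp only [mul_zero, Real.rpow_one] at h
    exact h.congr' (hΛL.mono fun n hn => hn.symm)
  obtain ⟨c', hcc', hc'1⟩ := exists_between hclt
  have hlast : Tendsto (fun n => Λ n * L n * Real.exp (L n)) atTop (nhds 0) := by
    have hsq : Tendsto (fun n : ℕ => Real.log n ^ 2 / n * Real.exp (L n)) atTop (nhds 0) := by
      refine squeeze_zero' (Eventually.of_forall fun n => by positivity) ?_
        (hlogpow 2 (1 - c') (by linarith))
      filter_upwards [hLd, hdlim.eventually_lt_const hcc', eventually_gt_atTop 0] with n hn hdn hn0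
      have hn0' : (0 : ℝ) < n := by exact_mod_cast hn0
      have hlog : 0 ≤ Real.log n := Real.log_natCast_nonneg n
      have h1 : Real.exp (L n) ≤ (n : ℝ) ^ c' := by
        rw [Real.rpow_def_of_pos hn0', hn]
        exact Real.exp_le_exp.mpr (by nlinarith)
      rw [Real.rpow_sub hn0', Real.rpow_one]
      calc _ ≤ Real.log n ^ 2 / n * (n : ℝ) ^ c' := by gcongr
        _ = _ := by
          have := (Real.rpow_pos_of_pos hn0' c').ne'
          field_simp
    have h := (hc.mul hdlim).mul hsq
    rw [mul_zero] at h
    refine h.congr' (hΛL.mono fun n hn => ?_)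
    simp only [hn]; ring
  refine ⟨hΛ0, ?_⟩
  have hexp : Tendsto (fun n => Real.exp (C * Λ n * L n)) atTop (nhds 1) := by
    have h := (Real.continuous_exp.tendsto 0).comp
      (by simpa using hΛL0.const_mul C : Tendsto (fun n => C * (Λ n * L n)) atTop (nhds 0))
    rw [Real.exp_zero] at h
    refine h.congr fun n => ?_
    simp [mul_assoc]
  have h := (hδ.mul hexp).mul ((hlast.const_mul M).const_add 1)
  simpa using h

/-- if `αₙ λ₁(n) = cₙ log n / n` with `cₙ → c < 1`, then
`limsup E[x_{n,1} x_{n,2}]/(E[x_{n,1}])² ≤ 1`. -/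
theorem second_moment_class1_isolated {r : ℕ} (μ : Fin (r + 1) → ℝ)
    (hμpos : ∀ i, 0 < μ i) (hμsum : ∑ i, μ i = 1)
    (K : ℕ → Fin (r + 1) → ℕ) (P : ℕ → ℕ) (α : ℕ → ℝ)
    (hK1 : ∀ n, 1 ≤ K n 0) (hKmono : ∀ n, Monotone (K n))
    (hKP : ∀ n, 2 * K n (Fin.last r) ≤ P n)
    (hα : ∀ n, α n ∈ Set.Ioo (0 : ℝ) 1)
    (cseq : ℕ → ℝ) (c : ℝ)
    (hscal : ∀ n, 2 ≤ n → α n * lamb μ (K n) (P n) 0 = cseq n * Real.log n / n)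
    (hc : Tendsto cseq atTop (nhds c)) (hclt : c < 1) :
    Filter.limsup
      (fun n : ℕ =>
        pr μ (K n) (α n)
            (fun cfg : Config n r (P n) =>
              IdxIsClass1Isolated 0 cfg ∧ IdxIsClass1Isolated 1 cfg) /
          (pr μ (K n) (α n) (fun cfg : Config n r (P n) => IdxIsClass1Isolated 0 cfg)) ^ 2)
      atTop ≤ 1 := by
  set Λ : ℕ → ℝ := fun n => cseq n * Real.log n / n with hΛ
  set L : ℕ → ℝ := fun n => (n : ℝ) * Λ n / (1 - Λ n) ^ 2 with hL
  set C : ℝ := ∑ i, (μ i)⁻¹ with hCdef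
  have hC : 0 ≤ C := Finset.sum_nonneg fun i _ => (inv_pos.mpr (hμpos i)).le
  obtain ⟨hΛ0, hbound⟩ := tendsto_bound cseq c C (μ 0)⁻¹ hc hclt Λ L (fun _ => rfl) (fun _ => rfl)
  have hwt : ∀ n, ∀ E : Config n r (P n) → Prop, 0 ≤ pr μ (K n) (α n) E := by
    classical
    intro n E
    rw [pr_eq_sum]
    refine Finset.sum_nonneg fun v _ => mul_nonneg
      (Finset.prod_nonneg fun x _ => nodeW_nonneg hμpos _ _) (Finset.sum_nonneg fun B _ => ?_)
    split_ifs
    · exact Finset.prod_nonneg fun e _ => chanW_nonneg (hα n) _ _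
    · exact le_rfl
  have hle : ∀ᶠ n : ℕ in atTop,
      pr μ (K n) (α n)
            (fun cfg : Config n r (P n) =>
              IdxIsClass1Isolated 0 cfg ∧ IdxIsClass1Isolated 1 cfg) /
          (pr μ (K n) (α n) (fun cfg : Config n r (P n) => IdxIsClass1Isolated 0 cfg)) ^ 2
      ≤ ((1 - Λ n) ^ 2)⁻¹ * Real.exp (C * Λ n * L n) *
        (1 + (μ 0)⁻¹ * (Λ n * L n * Real.exp (L n))) := by
    filter_upwards [eventually_ge_atTop 2, hΛ0.eventually_lt_const one_pos] with n hn hΛ1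
    have hΛn : α n * lamb μ (K n) (P n) 0 = Λ n := hscal n hn
    have hKP' : ∀ j, K n j ≤ P n := fun j => by
      have := hKmono n (Fin.le_last j)
      have := hKP n
      omega
    have hterm : ∀ j, 0 ≤ μ j * pEdge (P n) (K n 0) (K n j) :=
      fun j => mul_nonneg (hμpos j).le (pEdge_nonneg _ _ _)
    have hΛnn : 0 ≤ Λ n := by
      rw [← hΛn]
      exact mul_nonneg (hα n).1.le (Finset.sum_nonneg fun j _ => hterm j)
    have hpΛ : α n * (μ 0 * pEdge (P n) (K n 0) (K n 0)) ≤ Λ n := by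
      rw [← hΛn]
      refine mul_le_mul_of_nonneg_left ?_ (hα n).1.le
      exact Finset.single_le_sum (f := fun j => μ j * pEdge (P n) (K n 0) (K n j))
        (fun j _ => hterm j) (Finset.mem_univ 0)
    obtain ⟨m, rfl⟩ := Nat.exists_eq_add_of_le' hn
    have h1 := pr_isolated (m := m + 1) μ hμsum (K (m + 2)) hKP' (α (m + 2))
    have h2 := pr_isolated_two_le (m := m) μ hμpos hμsum (K (m + 2)) hKP' (α (m + 2)) (hα _)
      _ _ rfl rfl
    rw [hΛn] at h1 h2
    have h3 := ratio_le (m := m) (L := L (m + 2)) (pEdge_nonneg (P (m + 2)) (K (m + 2) 0)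
      (K (m + 2) 0)) (pEdge_le_one _ _ _) (hα _) hΛnn hΛ1 hC (hμpos 0) hpΛ rfl
    refine le_trans ?_ h3
    rw [h1]
    have hμ2 : 0 < μ 0 ^ 2 := pow_pos (hμpos 0) 2
    have hδ : 0 < 1 - Λ (m + 2) := by linarith
    rw [mul_pow, ← mul_div_mul_left _ (((1 - Λ (m + 2)) ^ (m + 1)) ^ 2) hμ2.ne']
    exact div_le_div_of_nonneg_right h2 (by positivity)
  have hcob : IsCoboundedUnder (· ≤ ·) atTop (fun n : ℕ =>
        pr μ (K n) (α n)
            (fun cfg : Config n r (P n) =>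
              IdxIsClass1Isolated 0 cfg ∧ IdxIsClass1Isolated 1 cfg) /
          (pr μ (K n) (α n) (fun cfg : Config n r (P n) => IdxIsClass1Isolated 0 cfg)) ^ 2) :=
    IsBoundedUnder.isCoboundedUnder_le
      ⟨0, eventually_map.mpr (Eventually.of_forall fun n =>
        div_nonneg (hwt n _) (sq_nonneg _))⟩
  rw [← hbound.limsup_eq]
  exact limsup_le_limsup hle hcob hbound.isBoundedUnder_le
end

section
/- Fix a probability vector μ = (μ_1,…,μ_r) with positive entries, integers 1 ≤ K_1 ≤ … ≤ K_r ≤ P/2, α ∈ (0,1), β, γ ∈ (0,1/2), positive integers ℓ ≤ n, L_n = min(⌊P/K_1⌋, ⌊n/2⌋), and thresholds X_{n,m} = ⌊β m K_1⌋ for 1 ≤ m ≤ L_n and X_{n,m} = ⌊γP⌋ for m > L_n (with X_{n,0} = 0). Let N be a Binomial(ℓ, α) random variable and let S be an independent random variable with P[S = K_j] = μ_j. Then E[ C(P − max(K_1, X_{n,N}+1)·1[N>0], S) / C(P, S) ] ≤ min{ 1 − α λ_1, min(1 − μ_r + μ_r e^{−α p_1r β ℓ}, e^{−α p_11 β ℓ})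 + e^{−γ K_1}·1[ℓ > L_n] }, where p_ij = 1 − C(P−K_i, K_j)/C(P, K_j) and λ_1 = Σ_{j=1}^r μ_j p_1j. -/
/-!
Write `f x = C(P - x, b) / C(P, b)`. It is the product over `t < x` of the factors
`1 - b / (P - t)` (`stepRatio`, `avoidProb_succ`), which decrease in `t` and in `b`.
Three bounds follow:

* `f` is log-concave with `f 0 = 1`, so `f x ^ k ≤ f k ^ x` for `k ≤ x` (`avoidProb_pow_le`);
* every factor is at most `exp (-b / P)`, so `f x ≤ exp (-x b / P)` (`avoidProb_le_exp`);
* `f x` decreases in `b` (`avoidProb_anti_right`).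

The bound `1 - α λ₁` uses only that at least `K₁` keys are to be avoided as soon as `N > 0`,
together with `(1 - α) ^ ℓ ≤ 1 - α`. For the other bound put `q = 1 - p_{1i}`. If `N` is at most the
cut-off, then the number of keys is at least `max (K₁, β N K₁)` and log-concavity gives
`f ≤ q ^ (β N)`; above the cut-off it is at least `γ P` and `f ≤ exp (-γ K₁)`. The binomial
theorem and Bernoulli's inequality then give
`E[q ^ (β N)] = (1 - α + α q ^ β) ^ ℓ ≤ (1 - α β p_{1i}) ^ ℓ ≤ exp (-α β p_{1i} ℓ)`,
and it remains to average over the classes `i`.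
-/

open Filter

/-- The cut-off `Lₙ = min(⌊P/K₁⌋, ⌊n/2⌋)` (natural division is the floor). -/
def cutoff (n P K1 : ℕ) : ℕ := min (P / K1) (n / 2)

/-- The key-threshold sequence `X_{n,m}`. -/
noncomputable def keyThr (n P K1 : ℕ) (β γ : ℝ) (m : ℕ) : ℕ :=
  if m ≤ cutoff n P K1 then ⌊β * (m : ℝ) * (K1 : ℝ)⌋₊ else ⌊γ * (P : ℝ)⌋₊

/-- The factor `1 - b / (P - t)` by which the avoidance probability changes when the avoided set
grows from `t` to `t + 1` elements; by truncation it is `0` once `P - t ≤ b`. -/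
noncomputable def stepRatio (P b t : ℕ) : ℝ := ((P - t - b : ℕ) : ℝ) / ((P - t : ℕ) : ℝ)

lemma stepRatio_nonneg (P b t : ℕ) : 0 ≤ stepRatio P b t := by
  unfold stepRatio; positivity

lemma stepRatio_anti {P b s t : ℕ} (h : s ≤ t) : stepRatio P b t ≤ stepRatio P b s := by
  unfold stepRatio
  rcases le_or_gt (P - t) b with hb | hb
  · rw [Nat.sub_eq_zero_of_le hb]
    simp only [Nat.cast_zero, zero_div]
    positivity
  · have h1 : P - t ≤ P - s := by omega
    have ht : (0 : ℝ) < ((P - t : ℕ) : ℝ) := by exact_mod_cast (by omega : 0 < P - t)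
    have hs : (0 : ℝ) < ((P - s : ℕ) : ℝ) := by exact_mod_cast (by omega : 0 < P - s)
    rw [div_le_div_iff₀ ht hs, Nat.cast_sub hb.le, Nat.cast_sub (hb.le.trans h1)]
    have h1' : ((P - t : ℕ) : ℝ) ≤ ((P - s : ℕ) : ℝ) := by exact_mod_cast h1
    have hb0 : (0 : ℝ) ≤ (b : ℝ) := by positivity
    nlinarith

lemma stepRatio_anti_right {P b c t : ℕ} (h : b ≤ c) : stepRatio P c t ≤ stepRatio P b t := by
  unfold stepRatio
  gcongr

lemma avoidProb_nonneg (P a b : ℕ) : 0 ≤ avoidProb P a b := by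
  unfold avoidProb; positivity

lemma avoidProb_anti {P a c b : ℕ} (h : a ≤ c) : avoidProb P c b ≤ avoidProb P a b := by
  unfold avoidProb
  have := Nat.choose_le_choose b (Nat.sub_le_sub_left h P)
  gcongr

lemma avoidProb_pos {P a b : ℕ} (h : a + b ≤ P) : 0 < avoidProb P a b := by
  unfold avoidProb
  have h1 : (0 : ℝ) < (P.choose b : ℝ) := by exact_mod_cast Nat.choose_pos (by omega)
  have h2 : (0 : ℝ) < ((P - a).choose b : ℝ) := by exact_mod_cast Nat.choose_pos (by omega)
  positivity

lemma avoidProb_succ {P b : ℕ} (hb : 1 ≤ b) (x : ℕ) :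
    avoidProb P (x + 1) b = avoidProb P x b * stepRatio P b x := by
  unfold avoidProb stepRatio
  rcases Nat.eq_zero_or_pos (P - x) with h0 | hpos
  · rw [h0, show P - (x + 1) = 0 by omega, Nat.choose_eq_zero_of_lt hb]
    simp
  · obtain ⟨m, hm⟩ : ∃ m, P - x = m + 1 := ⟨P - x - 1, by omega⟩
    rw [hm, show P - (x + 1) = m by omega]
    have key : (m.choose b : ℝ) * ((m + 1 : ℕ) : ℝ)
        = ((m + 1).choose b : ℝ) * ((m + 1 - b : ℕ) : ℝ) := by
      exact_mod_cast Nat.choose_mul_succ_eq m b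
    have hm0 : ((m + 1 : ℕ) : ℝ) ≠ 0 := by positivity
    rw [div_mul_div_comm, mul_comm (P.choose b : ℝ), ← key, mul_comm (m.choose b : ℝ),
      mul_div_mul_left _ _ hm0]

lemma stepRatio_pow_le_avoidProb {P b : ℕ} (hb : 1 ≤ b) (hbP : b ≤ P) (x : ℕ) :
    ∀ k, k ≤ x → stepRatio P b x ^ k ≤ avoidProb P k b := by
  intro k
  induction k with
  | zero => intro _; rw [avoidProb_zero hbP]; simp
  | succ k ih =>
    intro hk
    rw [pow_succ, avoidProb_succ hb]
    exact mul_le_mul (ih (by omega)) (stepRatio_anti (by omega)) (stepRatio_nonneg _ _ _)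
      (avoidProb_nonneg _ _ _)

/-- Log-concavity of `x ↦ avoidProb P x b`, in integer powers. -/
lemma avoidProb_pow_le {P b k x : ℕ} (hb : 1 ≤ b) (hbP : b ≤ P) (hkx : k ≤ x) :
    avoidProb P x b ^ k ≤ avoidProb P k b ^ x := by
  induction x, hkx using Nat.le_induction with
  | base => exact le_rfl
  | succ x hx ih =>
    rw [avoidProb_succ hb, mul_pow, pow_succ]
    exact mul_le_mul ih (stepRatio_pow_le_avoidProb hb hbP x k hx)
      (pow_nonneg (stepRatio_nonneg _ _ _) _) (pow_nonneg (avoidProb_nonneg _ _ _) _)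

lemma stepRatio_le_exp {P b : ℕ} (hb : 1 ≤ b) (hbP : b ≤ P) (t : ℕ) :
    stepRatio P b t ≤ Real.exp (-((b : ℝ) / P)) := by
  refine (stepRatio_anti (Nat.zero_le t)).trans ?_
  have hP : (0 : ℝ) < P := by exact_mod_cast (by omega : 0 < P)
  have h : stepRatio P b 0 = -((b : ℝ) / P) + 1 := by
    unfold stepRatio
    rw [Nat.sub_zero, Nat.cast_sub hbP]
    field_simp
    ring
  rw [h]
  exact Real.add_one_le_exp _

lemma avoidProb_le_exp {P b : ℕ} (hb : 1 ≤ b) (hbP : b ≤ P) (x : ℕ) :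
    avoidProb P x b ≤ Real.exp (-((x : ℝ) * ((b : ℝ) / P))) := by
  induction x with
  | zero => rw [avoidProb_zero hbP]; simp
  | succ x ih =>
    rw [avoidProb_succ hb]
    have h : Real.exp (-(((x + 1 : ℕ) : ℝ) * ((b : ℝ) / P)))
        = Real.exp (-((x : ℝ) * ((b : ℝ) / P))) * Real.exp (-((b : ℝ) / P)) := by
      rw [← Real.exp_add]; congr 1; push_cast; ring
    rw [h]
    exact mul_le_mul ih (stepRatio_le_exp hb hbP x) (stepRatio_nonneg _ _ _) (Real.exp_pos _).le

lemma avoidProb_anti_right {P b c : ℕ} (hb : 1 ≤ b) (hbc : b ≤ c) (hcP : c ≤ P) (x : ℕ) :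
    avoidProb P x c ≤ avoidProb P x b := by
  induction x with
  | zero => rw [avoidProb_zero hcP, avoidProb_zero (hbc.trans hcP)]
  | succ x ih =>
    rw [avoidProb_succ hb, avoidProb_succ (hb.trans hbc)]
    exact mul_le_mul ih (stepRatio_anti_right hbc) (stepRatio_nonneg _ _ _)
      (avoidProb_nonneg _ _ _)

/-- Log-concavity with a real exponent: `x ≥ k` and `x ≥ s k` give `f x ≤ (f k) ^ s`. -/
lemma avoidProb_le_rpow {P b k x : ℕ} {s : ℝ} (hb : 1 ≤ b) (hk : 1 ≤ k) (hP : k + b ≤ P)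
    (hkx : k ≤ x) (hs : s * k ≤ x) :
    avoidProb P x b ≤ avoidProb P k b ^ s := by
  have hk0 : (0 : ℝ) < k := by exact_mod_cast hk
  have hq : 0 < avoidProb P k b := avoidProb_pos hP
  have hq1 : avoidProb P k b ≤ 1 := by
    rw [← avoidProb_zero (show b ≤ P by omega)]; exact avoidProb_anti (Nat.zero_le _)
  have h := avoidProb_pow_le (P := P) hb (by omega) hkx
  calc avoidProb P x b = (avoidProb P x b ^ k) ^ ((k : ℝ)⁻¹) :=
        (Real.pow_rpow_inv_natCast (avoidProb_nonneg _ _ _) (by omega)).symm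
    _ ≤ (avoidProb P k b ^ x) ^ ((k : ℝ)⁻¹) :=
        Real.rpow_le_rpow (pow_nonneg (avoidProb_nonneg _ _ _) _) h (by positivity)
    _ = avoidProb P k b ^ ((x : ℝ) / k) := by
        rw [← Real.rpow_natCast, ← Real.rpow_mul hq.le, div_eq_mul_inv]
    _ ≤ avoidProb P k b ^ s :=
        Real.rpow_le_rpow_of_exponent_ge hq hq1 ((le_div_iff₀ hk0).2 hs)

/-- The moment `E[q ^ (β N)]` of a `Binomial(ℓ, α)` variable `N`, bounded through Bernoulli's
inequality `q ^ β ≤ 1 - β (1 - q)`. -/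
lemma binomial_moment_le {α β q : ℝ} (hα0 : 0 ≤ α) (hα1 : α ≤ 1) (hβ0 : 0 ≤ β) (hβ1 : β ≤ 1)
    (hq : 0 ≤ q) (ℓ : ℕ) :
    ∑ j ∈ Finset.range (ℓ + 1), (ℓ.choose j : ℝ) * α ^ j * (1 - α) ^ (ℓ - j) * q ^ (β * j)
      ≤ Real.exp (-(α * (1 - q) * β * ℓ)) := by
  have h1 : ∑ j ∈ Finset.range (ℓ + 1),
      (ℓ.choose j : ℝ) * α ^ j * (1 - α) ^ (ℓ - j) * q ^ (β * j)
      = (α * q ^ β + (1 - α)) ^ ℓ := by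
    rw [add_pow]
    refine Finset.sum_congr rfl fun j _ => ?_
    rw [Real.rpow_mul hq, Real.rpow_natCast, mul_pow]
    ring
  have h2 : q ^ β ≤ 1 + β * (q - 1) := by
    have := rpow_one_add_le_one_add_mul_self (s := q - 1) (by linarith) hβ0 hβ1
    rwa [add_sub_cancel] at this
  have h3 : α * q ^ β + (1 - α) ≤ Real.exp (-(α * (1 - q) * β)) := by
    have := Real.add_one_le_exp (-(α * (1 - q) * β))
    nlinarith
  have h0 : 0 ≤ α * q ^ β + (1 - α) := by
    have := Real.rpow_nonneg hq β
    nlinarith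
  rw [h1]
  calc (α * q ^ β + (1 - α)) ^ ℓ ≤ Real.exp (-(α * (1 - q) * β)) ^ ℓ := pow_le_pow_left₀ h0 h3 ℓ
    _ = Real.exp (-(α * (1 - q) * β * ℓ)) := by rw [← Real.exp_nat_mul]; congr 1; ring

lemma binomial_sum_one (α : ℝ) (ℓ : ℕ) :
    ∑ j ∈ Finset.range (ℓ + 1), (ℓ.choose j : ℝ) * α ^ j * (1 - α) ^ (ℓ - j) = 1 := by
  calc _ = (α + (1 - α)) ^ ℓ := by
        rw [add_pow]
        exact Finset.sum_congr rfl fun j _ => by ring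
    _ = 1 := by simp

/-- key lemma: with `N ∼ Binomial(ℓ, α)` and `S` independent with
`P[S = K_j] = μ_j`, one has
`E[C(P − max(K₁, X_{n,N}+1)·1[N>0], S)/C(P,S)] ≤
  min(1 − α λ₁, min(1 − μ_r + μ_r e^{−α p_{1r} β ℓ}, e^{−α p_{11} β ℓ}) + e^{−γK₁} 1[ℓ > Lₙ])`. -/
theorem key_expectation_bound {r : ℕ} (μ : Fin (r + 1) → ℝ)
    (hμpos : ∀ i, 0 < μ i) (hμsum : ∑ i, μ i = 1)
    (K : Fin (r + 1) → ℕ) (P : ℕ) (α : ℝ)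
    (hK1 : 1 ≤ K 0) (hKmono : Monotone K) (hKP : 2 * K (Fin.last r) ≤ P)
    (hα : α ∈ Set.Ioo (0 : ℝ) 1)
    (β γ : ℝ) (hβ : β ∈ Set.Ioo (0 : ℝ) (1 / 2)) (hγ : γ ∈ Set.Ioo (0 : ℝ) (1 / 2))
    (n ℓ : ℕ) (hℓ : 1 ≤ ℓ) (hℓn : ℓ ≤ n) :
    (∑ j ∈ Finset.range (ℓ + 1), ∑ i : Fin (r + 1),
        (ℓ.choose j : ℝ) * α ^ j * (1 - α) ^ (ℓ - j) * μ i *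
          (((P - (if j = 0 then 0 else max (K 0) (keyThr n P (K 0) β γ j + 1))).choose (K i) : ℝ) /
            (P.choose (K i) : ℝ))) ≤
      min (1 - α * lamb μ K P 0)
        (min (1 - μ (Fin.last r) +
            μ (Fin.last r) * Real.exp (-(α * pEdge P (K 0) (K (Fin.last r)) * β * ℓ)))
          (Real.exp (-(α * pEdge P (K 0) (K 0) * β * ℓ))) +
          (if cutoff n P (K 0) < ℓ then Real.exp (-(γ * (K 0 : ℝ))) else 0)) := by
  obtain ⟨hα0, hα1⟩ := hα
  obtain ⟨hβ0, hβ1⟩ := hβ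
  obtain ⟨hγ0, hγ1⟩ := hγ
  have hK0 : ∀ i, K 0 ≤ K i := fun i => hKmono (Fin.zero_le i)
  have hKr : ∀ i, K i ≤ K (Fin.last r) := fun i => hKmono (Fin.le_last i)
  have hKi1 : ∀ i, 1 ≤ K i := fun i => hK1.trans (hK0 i)
  have hKKP : ∀ i, K 0 + K i ≤ P := fun i => by have := hK0 i; have := hKr i; omega
  have hKiP : ∀ i, K i ≤ P := fun i => by have := hKKP i; omega
  set x : ℕ → ℕ := fun j => if j = 0 then 0 else max (K 0) (keyThr n P (K 0) β γ j + 1) with hx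
  set w : ℕ → ℝ := fun j => (ℓ.choose j : ℝ) * α ^ j * (1 - α) ^ (ℓ - j) with hw
  have hw0 : ∀ j, 0 ≤ w j := fun j => by
    have : 0 ≤ 1 - α := by linarith
    simp only [hw]; positivity
  have hwsum : ∑ j ∈ Finset.range (ℓ + 1), w j = 1 := binomial_sum_one α ℓ
  have hLHS : (∑ j ∈ Finset.range (ℓ + 1), ∑ i : Fin (r + 1),
        (ℓ.choose j : ℝ) * α ^ j * (1 - α) ^ (ℓ - j) * μ i *
          (((P - (if j = 0 then 0 else max (K 0) (keyThr n P (K 0) β γ j + 1))).choose (K i) : ℝ) /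
            (P.choose (K i) : ℝ)))
      = ∑ i, μ i * ∑ j ∈ Finset.range (ℓ + 1), w j * avoidProb P (x j) (K i) := by
    rw [Finset.sum_comm]
    refine Finset.sum_congr rfl fun i _ => ?_
    rw [Finset.mul_sum]
    refine Finset.sum_congr rfl fun j _ => ?_
    simp only [hw, hx, avoidProb]
    ring
  rw [hLHS]
  refine le_min ?_ ?_
  · have hi : ∀ i, ∑ j ∈ Finset.range (ℓ + 1), w j * avoidProb P (x j) (K i)
        ≤ 1 - α * pEdge P (K 0) (K i) := by
      intro i
      have hq1 : avoidProb P (K 0) (K i) ≤ 1 := by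
        rw [← avoidProb_zero (hKiP i)]; exact avoidProb_anti (Nat.zero_le _)
      rw [Finset.sum_range_succ'] at hwsum ⊢
      have hw00 : w 0 = (1 - α) ^ ℓ := by simp [hw]
      have hx0 : x 0 = 0 := by simp [hx]
      have hrest : ∑ j ∈ Finset.range ℓ, w (j + 1) * avoidProb P (x (j + 1)) (K i)
          ≤ (∑ j ∈ Finset.range ℓ, w (j + 1)) * avoidProb P (K 0) (K i) := by
        rw [Finset.sum_mul]
        refine Finset.sum_le_sum fun j _ => mul_le_mul_of_nonneg_left (avoidProb_anti ?_) (hw0 _)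
        simp [hx]
      have hpow : (1 - α) ^ ℓ ≤ 1 - α :=
        pow_le_of_le_one (by linarith) (by linarith) (by omega)
      rw [hx0, avoidProb_zero (hKiP i), hw00, mul_one]
      rw [hw00] at hwsum
      unfold pEdge
      have hs : ∑ j ∈ Finset.range ℓ, w (j + 1) = 1 - (1 - α) ^ ℓ := by linarith
      rw [hs] at hrest
      nlinarith
    calc ∑ i, μ i * ∑ j ∈ Finset.range (ℓ + 1), w j * avoidProb P (x j) (K i)
        ≤ ∑ i, μ i * (1 - α * pEdge P (K 0) (K i)) :=
          Finset.sum_le_sum fun i _ => mul_le_mul_of_nonneg_left (hi i) (hμpos i).le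
      _ = ∑ i, μ i - α * lamb μ K P 0 := by
          rw [lamb, Finset.mul_sum, ← Finset.sum_sub_distrib]
          exact Finset.sum_congr rfl fun i _ => by ring
      _ = 1 - α * lamb μ K P 0 := by rw [hμsum]
  · set E : ℝ := if cutoff n P (K 0) < ℓ then Real.exp (-(γ * (K 0 : ℝ))) else 0 with hE
    have hE0 : 0 ≤ E := by
      rw [hE]; split_ifs
      · exact (Real.exp_pos _).le
      · exact le_rfl
    have hpt : ∀ i, ∀ j ∈ Finset.range (ℓ + 1),
        avoidProb P (x j) (K i) ≤ avoidProb P (K 0) (K i) ^ (β * (j : ℝ)) + E := by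
      intro i j hj
      have hjℓ : j ≤ ℓ := by rw [Finset.mem_range] at hj; omega
      have hrp : 0 ≤ avoidProb P (K 0) (K i) ^ (β * (j : ℝ)) :=
        Real.rpow_nonneg (avoidProb_nonneg _ _ _) _
      rcases Nat.eq_zero_or_pos j with rfl | hjpos
      · have : x 0 = 0 := by simp [hx]
        rw [this, avoidProb_zero (hKiP i)]
        simpa using hE0
      have hxj : x j = max (K 0) (keyThr n P (K 0) β γ j + 1) := by simp [hx, hjpos.ne']
      have hxK : K 0 ≤ x j := hxj ▸ le_max_left _ _
      have hxT : ((keyThr n P (K 0) β γ j : ℕ) : ℝ) + 1 ≤ (x j : ℝ) := by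
        exact_mod_cast hxj ▸ le_max_right _ _
      rcases le_or_gt j (cutoff n P (K 0)) with hjL | hjL
      · rw [keyThr, if_pos hjL] at hxT
        have hfl := Nat.lt_floor_add_one (β * (j : ℝ) * (K 0 : ℝ))
        have := avoidProb_le_rpow (P := P) (s := β * (j : ℝ)) (hKi1 i) hK1 (hKKP i) hxK
          (by linarith)
        linarith
      · rw [keyThr, if_neg (by omega)] at hxT
        have hfl := Nat.lt_floor_add_one (γ * (P : ℝ))
        have hEe : E = Real.exp (-(γ * (K 0 : ℝ))) := if_pos (by omega)
        have hP0 : (0 : ℝ) < P := by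
          have := hKKP i
          exact_mod_cast (by omega : 0 < P)
        have hKc : (K 0 : ℝ) ≤ (K i : ℝ) := by exact_mod_cast hK0 i
        have hmain : γ * (K 0 : ℝ) ≤ (x j : ℝ) * ((K i : ℝ) / P) := by
          calc γ * (K 0 : ℝ) ≤ γ * (K i : ℝ) := by gcongr
            _ = γ * P * ((K i : ℝ) / P) := by field_simp
            _ ≤ (x j : ℝ) * ((K i : ℝ) / P) :=
                mul_le_mul_of_nonneg_right (by linarith) (by positivity)
        have h1 := avoidProb_le_exp (hKi1 i) (hKiP i) (x j)
        have h2 := Real.exp_le_exp.2 (neg_le_neg hmain)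
        rw [hEe]
        linarith
    have hi : ∀ i, ∑ j ∈ Finset.range (ℓ + 1), w j * avoidProb P (x j) (K i)
        ≤ Real.exp (-(α * pEdge P (K 0) (K i) * β * ℓ)) + E := by
      intro i
      calc ∑ j ∈ Finset.range (ℓ + 1), w j * avoidProb P (x j) (K i)
          ≤ ∑ j ∈ Finset.range (ℓ + 1),
              w j * (avoidProb P (K 0) (K i) ^ (β * (j : ℝ)) + E) :=
            Finset.sum_le_sum fun j hj => mul_le_mul_of_nonneg_left (hpt i j hj) (hw0 j)
        _ = ∑ j ∈ Finset.range (ℓ + 1), w j * avoidProb P (K 0) (K i) ^ (β * (j : ℝ)) + E := by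
            simp only [mul_add, Finset.sum_add_distrib]
            rw [← Finset.sum_mul, hwsum, one_mul]
        _ ≤ Real.exp (-(α * pEdge P (K 0) (K i) * β * ℓ)) + E := by
            have := binomial_moment_le hα0.le hα1.le hβ0.le (by linarith)
              (avoidProb_nonneg P (K 0) (K i)) ℓ
            unfold pEdge
            linarith
    have hsum : ∑ i, μ i * ∑ j ∈ Finset.range (ℓ + 1), w j * avoidProb P (x j) (K i)
        ≤ ∑ i, μ i * Real.exp (-(α * pEdge P (K 0) (K i) * β * ℓ)) + E := by
      calc ∑ i, μ i * ∑ j ∈ Finset.range (ℓ + 1), w j * avoidProb P (x j) (K i)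
          ≤ ∑ i, μ i * (Real.exp (-(α * pEdge P (K 0) (K i) * β * ℓ)) + E) :=
            Finset.sum_le_sum fun i _ => mul_le_mul_of_nonneg_left (hi i) (hμpos i).le
        _ = _ := by
            simp only [mul_add, Finset.sum_add_distrib]
            rw [← Finset.sum_mul, hμsum, one_mul]
    refine hsum.trans (add_le_add_left (le_min ?_ ?_) E)
    · -- The classes other than the last are bounded trivially, by `exp (-p) ≤ 1`.
      rw [Fin.sum_univ_castSucc] at hμsum ⊢
      have hle : ∑ i : Fin r, μ i.castSucc *
          Real.exp (-(α * pEdge P (K 0) (K i.castSucc) * β * ℓ)) ≤ ∑ i : Fin r, μ i.castSucc := by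
        refine Finset.sum_le_sum fun i _ => mul_le_of_le_one_right (hμpos _).le ?_
        rw [Real.exp_le_one_iff, neg_nonpos]
        have hp : 0 ≤ pEdge P (K 0) (K i.castSucc) := by
          unfold pEdge
          have : avoidProb P (K 0) (K i.castSucc) ≤ avoidProb P 0 (K i.castSucc) :=
            avoidProb_anti (Nat.zero_le _)
          rw [avoidProb_zero (hKiP _)] at this
          linarith
        positivity
      linarith
    · calc ∑ i, μ i * Real.exp (-(α * pEdge P (K 0) (K i) * β * ℓ))
          ≤ ∑ i, μ i * Real.exp (-(α * pEdge P (K 0) (K 0) * β * ℓ)) := by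
            refine Finset.sum_le_sum fun i _ => mul_le_mul_of_nonneg_left ?_ (hμpos i).le
            have hp : pEdge P (K 0) (K 0) ≤ pEdge P (K 0) (K i) :=
              sub_le_sub_left (avoidProb_anti_right hK1 (hK0 i) (hKiP i) _) _
            gcongr
        _ = _ := by rw [← Finset.sum_mul, hμsum, one_mul]
end

section
/- Let 1 ≤ K_1 ≤ K_r ≤ P/2 be integers and set p_1r = 1 − C(P−K_1, K_r)/C(P, K_r). If p_1r ≤ 1/2, then p_1r ≥ K_1 K_r / (2P). -/
/-!
Write `x = K₁ K_r / P`. Removing one element from an `n`-set with `n ≤ P` multiplies `C(n, b)` by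
`1 - b / n ≤ exp (-b / P)`, so iterating `K₁` times bounds the avoidance probability by `exp (-x)`
(`choose_sub_le_choose_mul_exp`). Since this probability is at least `1/2` and
`exp (-x) ≤ 1 / (1 + x)`, we have `x ≤ 1`, and then `1 / (1 + x) ≤ 1 - x / 2` gives the claim.
-/

open Filter

lemma choose_le_choose_succ_mul_exp {P m b : ℕ} (hm : m + 1 ≤ P) (hb : b ≤ m + 1) :
    (m.choose b : ℝ) ≤ ((m + 1).choose b : ℝ) * Real.exp (-((b : ℝ) / P)) := by
  have e : (m.choose b : ℝ) * (m + 1) = ((m + 1).choose b : ℝ) * ((m + 1 : ℝ) - b) := by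
    have := Nat.choose_mul_succ_eq m b
    have h2 := congrArg (Nat.cast : ℕ → ℝ) this
    push_cast [Nat.cast_sub hb] at h2
    exact h2
  have hm0 : (0 : ℝ) < m + 1 := by positivity
  have hmP : (m + 1 : ℝ) ≤ P := by exact_mod_cast hm
  have e2 : (m.choose b : ℝ) = ((m + 1).choose b : ℝ) * (1 - (b : ℝ) / (m + 1)) := by
    field_simp
    linarith
  rw [e2]
  gcongr
  have h1 : (b : ℝ) / P ≤ b / (m + 1) := by gcongr
  have h2 := Real.add_one_le_exp (-((b : ℝ) / P))
  linarith

lemma choose_sub_le_choose_mul_exp {P b : ℕ} (a : ℕ) (hab : a + b ≤ P) :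
    ((P - a).choose b : ℝ) ≤ (P.choose b : ℝ) * Real.exp (-((a : ℝ) * b / P)) := by
  induction a with
  | zero => simp
  | succ a ih =>
    have h1 := choose_le_choose_succ_mul_exp (P := P) (m := P - (a + 1)) (b := b)
      (by omega) (by omega)
    rw [show P - (a + 1) + 1 = P - a by omega] at h1
    calc ((P - (a + 1)).choose b : ℝ)
        ≤ ((P - a).choose b : ℝ) * Real.exp (-((b : ℝ) / P)) := h1
      _ ≤ ((P.choose b : ℝ) * Real.exp (-((a : ℝ) * b / P))) * Real.exp (-((b : ℝ) / P)) := by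
          gcongr
          exact ih (by omega)
      _ = _ := by
          rw [mul_assoc, ← Real.exp_add]
          congr 2
          push_cast
          ring

/-- if `p_{1r} ≤ 1/2` then `p_{1r} ≥ K₁ K_r / (2P)`. -/
theorem p1r_lower_bound (K1 Kr P : ℕ) (hK1 : 1 ≤ K1) (hK1r : K1 ≤ Kr) (hKP : 2 * Kr ≤ P)
    (h : pEdge P K1 Kr ≤ 1 / 2) :
    (K1 : ℝ) * (Kr : ℝ) / (2 * (P : ℝ)) ≤ pEdge P K1 Kr := by
  have hc : (0 : ℝ) < P.choose Kr := by exact_mod_cast Nat.choose_pos (by omega)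
  have ha : avoidProb P K1 Kr ≤ Real.exp (-((K1 : ℝ) * Kr / P)) := by
    unfold avoidProb
    rw [div_le_iff₀ hc, mul_comm]
    exact choose_sub_le_choose_mul_exp K1 (by omega)
  have hx2 : (K1 : ℝ) * Kr / (2 * P) = ((K1 : ℝ) * Kr / P) / 2 := by
    rw [div_div, mul_comm (2 : ℝ)]
  have hx0 : 0 ≤ (K1 : ℝ) * Kr / P := by positivity
  unfold pEdge at h ⊢
  rw [hx2]
  generalize (K1 : ℝ) * Kr / P = x at *
  have h1 : Real.exp (-x) * (1 + x) ≤ 1 := by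
    calc Real.exp (-x) * (1 + x) ≤ Real.exp (-x) * Real.exp x := by
          gcongr
          linarith [Real.add_one_le_exp x]
      _ = 1 := by rw [← Real.exp_add]; simp
  have hx1 : x ≤ 1 := by nlinarith
  nlinarith
end

section
/- Let 1 ≤ K_1 ≤ K_r ≤ P/2 be integers and set p_1r = 1 − C(P−K_1, K_r)/C(P, K_r) and p_rr = 1 − C(P−K_r, K_r)/C(P, K_r). If p_1r ≤ 1/2, then p_rr ≤ 4 (K_r/K_1) p_1r. -/
/-!
For fixed `1 ≤ b ≤ P`, the map `a ↦ pEdge P a b` is concave and vanishes at `0`: by Pascal's rule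
its increments are `C(P-a-1, b-1) / C(P, b)` for `a < P`, which decrease in `a`. Hence `pEdge P a b / a`
is nonincreasing for `a ≥ 1` (`pEdge_mul_le`), so `p_rr ≤ (K_r / K_1) p_1r`. Since `p_1r ≥ 0`, the
bound with the additional factor `4` follows.
-/

open Filter

lemma choose_convex (n b : ℕ) :
    2 * (n - 1).choose b ≤ n.choose b + (n - 2).choose b := by
  match n, b with
  | 0, b => simp; omega
  | 1, b =>
    have := Nat.choose_le_choose b (show 0 ≤ 1 by omega)
    simp only [show 1 - 2 = 0 from rfl]
    omega
  | n + 2, 0 => simp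
  | n + 2, b + 1 =>
    have h1 : (n + 2).choose (b + 1) = (n + 1).choose b + (n + 1).choose (b + 1) :=
      Nat.choose_succ_succ (n + 1) b
    have h2 := Nat.choose_succ_succ n b
    have h3 := Nat.choose_le_choose b (Nat.le_succ n)
    simp only [Nat.succ_eq_add_one, Nat.add_sub_cancel, show n + 2 - 1 = n + 1 from rfl] at *
    omega

lemma avoidProb_convex (P a b : ℕ) :
    2 * avoidProb P (a + 1) b ≤ avoidProb P a b + avoidProb P (a + 2) b := by
  have h : (2 : ℝ) * ((P - (a + 1)).choose b : ℝ)
      ≤ ((P - a).choose b : ℝ) + ((P - (a + 2)).choose b : ℝ) := by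
    have := choose_convex (P - a) b
    rw [Nat.sub_sub, Nat.sub_sub] at this
    exact_mod_cast this
  unfold avoidProb
  rw [← add_div, ← mul_div_assoc]
  gcongr

lemma avoidProb_le_one (P a b : ℕ) : avoidProb P a b ≤ 1 := by
  unfold avoidProb
  apply div_le_one_of_le₀ _ (Nat.cast_nonneg _)
  exact_mod_cast Nat.choose_le_choose b (Nat.sub_le P a)

/-- The increments of `pEdge P · b` before `a` are at least the one at `a`, and they sum to at most
`pEdge P a b`, because `pEdge P 0 b ≥ 0` (it is `1` in the junk case `P < b`). -/
lemma mul_increment_le (P b a : ℕ) :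
    (a : ℝ) * (avoidProb P a b - avoidProb P (a + 1) b) ≤ pEdge P a b := by
  induction a with
  | zero =>
    have := avoidProb_le_one P 0 b
    simp [pEdge, this]
  | succ a ih =>
    have hc := mul_le_mul_of_nonneg_left (avoidProb_convex P a b)
      (show (0 : ℝ) ≤ (a : ℝ) + 1 by positivity)
    unfold pEdge at *
    push_cast
    linarith

/-- The quotient `pEdge P a b / a` is nonincreasing in `a`, in cross-multiplied form. -/
lemma pEdge_mul_le (P b k r : ℕ) (hk : 1 ≤ k) (hkr : k ≤ r) :
    (k : ℝ) * pEdge P r b ≤ r * pEdge P k b := by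
  induction r, hkr using Nat.le_induction with
  | base => exact le_rfl
  | succ r hr ih =>
    have hr0 : (0 : ℝ) < r := by exact_mod_cast (by omega : 0 < r)
    have hstep : (r : ℝ) * pEdge P (r + 1) b ≤ (r + 1) * pEdge P r b := by
      have := mul_increment_le P b r
      unfold pEdge at *
      linarith
    have h1 := mul_le_mul_of_nonneg_left hstep (Nat.cast_nonneg (α := ℝ) k)
    have h2 := mul_le_mul_of_nonneg_left ih (show (0 : ℝ) ≤ (r : ℝ) + 1 by positivity)
    push_cast
    refine le_of_mul_le_mul_left ?_ hr0
    linarith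

/-- if `p_{1r} ≤ 1/2` then `p_{rr} ≤ 4 (K_r/K₁) p_{1r}`. -/
theorem prr_upper_bound (K1 Kr P : ℕ) (hK1 : 1 ≤ K1) (hK1r : K1 ≤ Kr) (hKP : 2 * Kr ≤ P)
    (h : pEdge P K1 Kr ≤ 1 / 2) :
    pEdge P Kr Kr ≤ 4 * ((Kr : ℝ) / (K1 : ℝ)) * pEdge P K1 Kr := by
  have hpos : (0 : ℝ) < K1 := by exact_mod_cast hK1
  have hp : 0 ≤ pEdge P K1 Kr := sub_nonneg.mpr (avoidProb_le_one P K1 Kr)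
  have hle : pEdge P Kr Kr ≤ (Kr : ℝ) / K1 * pEdge P K1 Kr := by
    rw [div_mul_eq_mul_div, le_div_iff₀ hpos, mul_comm]
    exact pEdge_mul_le P Kr K1 Kr hK1 hK1r
  have hnn : 0 ≤ (Kr : ℝ) / K1 * pEdge P K1 Kr := by positivity
  linarith
end
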